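/- In a monoidal category, if an update structure (Put, Get, m, Δ) satisfies PutPut and GetGet and is faithful (in the sense that the property can be exactly recovered: there is a state/effect pair witnessing that (effect on S ⊗ id_p) ∘ Get ∘ Put ∘ (state of S ⊗ id_p) = id_p), then the magma m is associative and the comagma Δ is coassociative. -/

import Mathlib

open CategoryTheory MonoidalCategory

section UpdateStructure

variable {C : Type*} [Category C] [MonoidalCategory C] {S p : C}

/-- If acting on some state of `S` has a retraction, then morphisms into `p` are determined by
their action on `S`. -/
lemma eq_of_whiskerLeft_comp_eq (put : S ⊗ p ⟶ S) (ψ : 𝟙_ C ⟶ S) (r : S ⟶ p)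
    (h : (λ_ p).inv ≫ (ψ ▷ p) ≫ put ≫ r = 𝟙 p) {X : C} {f g : X ⟶ p}
    (hfg : (S ◁ f) ≫ put = (S ◁ g) ≫ put) : f = g := by
  have key (k : X ⟶ p) : k = (λ_ X).inv ≫ (ψ ▷ X) ≫ ((S ◁ k) ≫ put) ≫ r := by
    rw [Category.assoc, ← whisker_exchange_assoc, ← leftUnitor_inv_naturality_assoc, h,
      Category.comp_id]
  rw [key f, key g, hfg]

/-- If reading through some effect on `S` has a section, then morphisms out of `p` are determined
by their composite with `get`. -/
lemma eq_of_comp_whiskerLeft_eq (get : S ⟶ S ⊗ p) (φ : S ⟶ 𝟙_ C) (s : p ⟶ S)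
    (h : s ≫ get ≫ (φ ▷ p) ≫ (λ_ p).hom = 𝟙 p) {X : C} {f g : p ⟶ X}
    (hfg : get ≫ (S ◁ f) = get ≫ (S ◁ g)) : f = g := by
  have key (k : p ⟶ X) : k = s ≫ (get ≫ (S ◁ k)) ≫ (φ ▷ X) ≫ (λ_ X).hom := by
    rw [Category.assoc, whisker_exchange_assoc, leftUnitor_naturality]
    simpa using (h =≫ k).symm
  rw [key f, key g, hfg]

/-- PutPut makes both bracketings of `m` act on `S` in the same way. -/
lemma whiskerLeft_mul_assoc_comp_put (put : S ⊗ p ⟶ S) (m : p ⊗ p ⟶ p)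
    (putput : (put ▷ p) ≫ put = (α_ S p p).hom ≫ (S ◁ m) ≫ put) :
    (S ◁ ((m ▷ p) ≫ m)) ≫ put = (S ◁ ((α_ p p p).hom ≫ (p ◁ m) ≫ m)) ≫ put := by
  have h : (S ◁ m) ≫ put = (α_ S p p).inv ≫ (put ▷ p) ≫ put := by simp [putput]
  have hl : (S ◁ ((m ▷ p) ≫ m)) ≫ put =
      (α_ S (p ⊗ p) p).inv ≫ ((α_ S p p).inv ▷ p) ≫ (put ▷ p ▷ p) ≫ (put ▷ p) ≫ put := by
    rw [whiskerLeft_comp, Category.assoc, h, associator_inv_naturality_middle_assoc,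
      ← comp_whiskerRight_assoc, h]
    simp only [comp_whiskerRight, Category.assoc]
  have hr : (S ◁ ((p ◁ m) ≫ m)) ≫ put =
      (α_ S p (p ⊗ p)).inv ≫ (α_ (S ⊗ p) p p).inv ≫ (put ▷ p ▷ p) ≫ (put ▷ p) ≫ put := by
    rw [whiskerLeft_comp, Category.assoc, h, associator_inv_naturality_right_assoc,
      whisker_exchange_assoc, h, associator_inv_naturality_left_assoc]
  rw [hl, whiskerLeft_comp, Category.assoc, hr]
  simp

/-- GetGet makes both bracketings of `Δ` agree after `get`. -/
lemma get_comp_whiskerLeft_comul_coassoc (get : S ⟶ S ⊗ p) (Δ : p ⟶ p ⊗ p)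
    (getget : get ≫ (get ▷ p) = get ≫ (S ◁ Δ) ≫ (α_ S p p).inv) :
    get ≫ (S ◁ (Δ ≫ (Δ ▷ p))) = get ≫ (S ◁ (Δ ≫ (p ◁ Δ) ≫ (α_ p p p).inv)) := by
  have h : get ≫ (S ◁ Δ) = get ≫ (get ▷ p) ≫ (α_ S p p).hom := by
    simp [reassoc_of% getget]
  have hl : get ≫ (S ◁ (Δ ≫ (Δ ▷ p))) =
      get ≫ (get ▷ p) ≫ (get ▷ p ▷ p) ≫ ((α_ S p p).hom ▷ p) ≫ (α_ S (p ⊗ p) p).hom := by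
    rw [whiskerLeft_comp, reassoc_of% h, ← associator_naturality_middle,
      ← comp_whiskerRight_assoc, h]
    simp only [comp_whiskerRight, Category.assoc]
  have hr : get ≫ (S ◁ (Δ ≫ (p ◁ Δ))) =
      get ≫ (get ▷ p) ≫ (get ▷ p ▷ p) ≫ (α_ (S ⊗ p) p p).hom ≫ (α_ S p (p ⊗ p)).hom := by
    rw [whiskerLeft_comp, reassoc_of% h, ← associator_naturality_right,
      ← whisker_exchange_assoc, reassoc_of% h, associator_naturality_left_assoc]
  rw [hl, ← Category.assoc Δ, whiskerLeft_comp, reassoc_of% hr]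
  simp

end UpdateStructure

open CategoryTheory MonoidalCategory

/-- If an update structure satisfying PutPut and GetGet is faithful, then its magma
is associative and its comagma is coassociative. -/
theorem faithful_assoc_coassoc {C : Type*} [Category C] [MonoidalCategory C] {S p : C}
    (put : S ⊗ p ⟶ S) (get : S ⟶ S ⊗ p) (m : p ⊗ p ⟶ p) (Δ : p ⟶ p ⊗ p)
    (putput : (put ▷ p) ≫ put = (α_ S p p).hom ≫ (S ◁ m) ≫ put)
    (getget : get ≫ (get ▷ p) = get ≫ (S ◁ Δ) ≫ (α_ S p p).inv)
    -- faithfulness: a state/effect pair on S witnessing exact recovery of the property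
    (faithful : ∃ (ψ : 𝟙_ C ⟶ S) (φ : S ⟶ 𝟙_ C),
      (λ_ p).inv ≫ (ψ ▷ p) ≫ put ≫ get ≫ (φ ▷ p) ≫ (λ_ p).hom = 𝟙 p) :
    -- the magma is associative
    ((m ▷ p) ≫ m = (α_ p p p).hom ≫ (p ◁ m) ≫ m) ∧
    -- the comagma is coassociative
    (Δ ≫ (Δ ▷ p) = Δ ≫ (p ◁ Δ) ≫ (α_ p p p).inv) := by
  obtain ⟨ψ, φ, h⟩ := faithful
  exact ⟨eq_of_whiskerLeft_comp_eq put ψ (get ≫ (φ ▷ p) ≫ (λ_ p).hom) h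
      (whiskerLeft_mul_assoc_comp_put put m putput),
    eq_of_comp_whiskerLeft_eq get φ ((λ_ p).inv ≫ (ψ ▷ p) ≫ put) (by simpa using h)
      (get_comp_whiskerLeft_comul_coassoc get Δ getget)⟩
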